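/- arXiv:1903.05399 — 4 statements merged into one kernel-verified Lean document; each statement's English description precedes it below -/
import Mathlib

section
/- Let A be a pseudo D-poset. Define a partial binary operation + on A by declaring a + b to be defined and equal to c if and only if b ≤ c and c/b = a. Then (A, +, 0, 1) is a pseudo effect algebra. -/
/-!
Write `a + b = c` for `b ≤ c ∧ c / b = a`. Putting the least element into (PD2) gives
`c ∖ (c / b) = b` and `c / (c ∖ a) = a`, so `a + b = c` holds equally iff `a ≤ c ∧ c ∖ a = b`
(`isSum_iff_diffR`). Existence and uniqueness of complements (PE2) and the exchange law (PE3) are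
immediate from these two descriptions, and (PE4) follows from `c / c = c ∖ c = 0`.

The sum is single-valued (`IsSum.unique`) because, for `b ≤ c ≤ 1`, (PD2) reads
`c / b + 1 / c = 1 / b`. So `b` and `a = c / b` determine `1 / c`, and `c = 1 ∖ (1 / c)`.
Associativity (PE1) is (PD2) again: if `b + c = x` and `a + x = y`, then
`b = x / c = (y / c) ∖ (y / x) = (y / c) ∖ a`, that is, `a + b = y / c`.
-/


universe u

/-- A pseudo effect algebra: a set with a partial binary operation `+` (modelled as an
`Option`-valued total operation, `add a b = some c` meaning "`a + b` is defined and equals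
`c`") and constants `0`, `1`, satisfying (PE1)–(PE4). -/
structure PseudoEffectAlgebra (α : Type u) where
  /-- The partial addition: `add a b = some c` iff `a + b` is defined and equals `c`. -/
  add : α → α → Option α
  /-- The constant `0`. -/
  zero : α
  /-- The constant `1`. -/
  one : α
  /-- (PE1) If `a + (b + c)` exists, then `(a + b) + c` exists and the two are equal. -/
  assoc : ∀ a b c bc abc : α, add b c = some bc → add a bc = some abc →
    ∃ ab : α, add a b = some ab ∧ add ab c = some abc
  /-- (PE2) There is exactly one `d` and exactly one `e` such that `a + d = e + a = 1`. -/
  unit : ∀ a : α, (∃! d : α, add a d = some one) ∧ (∃! e : α, add e a = some one)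
  /-- (PE3) If `a + b` exists, then there are `d, e` with `d + a = b + e = a + b`. -/
  exchange : ∀ a b ab : α, add a b = some ab →
    ∃ d e : α, add d a = some ab ∧ add b e = some ab
  /-- (PE4) If `a + 1` exists or `1 + a` exists, then `a = 0`. -/
  pos : ∀ a c : α, (add a one = some c ∨ add one a = some c) → a = zero

/-- A pseudo D-poset: a bounded poset with partial differences `diffL a b h = b / a`
and `diffR a b h = b ∖ a`, defined whenever `a ≤ b`. -/
class PseudoDPoset (α : Type u) extends PartialOrder α, BoundedOrder α where
  /-- `diffL a b h` is `b / a`. -/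
  diffL : (a b : α) → a ≤ b → α
  /-- `diffR a b h` is `b ∖ a`. -/
  diffR : (a b : α) → a ≤ b → α
  diffL_bot : ∀ a : α, diffL ⊥ a (OrderBot.bot_le a) = a
  diffR_bot : ∀ a : α, diffR ⊥ a (OrderBot.bot_le a) = a
  diffL_anti : ∀ {a b c : α} (hab : a ≤ b) (hbc : b ≤ c),
    diffL b c hbc ≤ diffL a c (hab.trans hbc)
  diffR_anti : ∀ {a b c : α} (hab : a ≤ b) (hbc : b ≤ c),
    diffR b c hbc ≤ diffR a c (hab.trans hbc)
  diffR_diffL : ∀ {a b c : α} (hab : a ≤ b) (hbc : b ≤ c),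
    diffR (diffL b c hbc) (diffL a c (hab.trans hbc)) (diffL_anti hab hbc) = diffL a b hab
  diffL_diffR : ∀ {a b c : α} (hab : a ≤ b) (hbc : b ≤ c),
    diffL (diffR b c hbc) (diffR a c (hab.trans hbc)) (diffR_anti hab hbc) = diffR a b hab

/-- Compatibility between a pseudo effect algebra structure and a pseudo D-poset structure on
the same underlying set: the order is the effect-algebra order, `⊥ = 0`, `⊤ = 1`, and for
`a ≤ c` the differences satisfy `a + (c / a) = (c ∖ a) + a = c`. -/
def Compat {α : Type u} (A : PseudoEffectAlgebra α) (P : PseudoDPoset α) : Prop :=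
  letI := P
  (∀ a c : α, a ≤ c ↔ ∃ b : α, A.add a b = some c) ∧
  (⊥ : α) = A.zero ∧ (⊤ : α) = A.one ∧
  ∀ (a c : α) (h : a ≤ c),
    A.add a (PseudoDPoset.diffL a c h) = some c ∧
    A.add (PseudoDPoset.diffR a c h) a = some c

namespace PseudoDPoset

variable {α : Type u} [PseudoDPoset α]

/-- The graph of the partial addition: `a + b` is defined and equals `c`. -/
def IsSum (a b c : α) : Prop := ∃ h : b ≤ c, diffL b c h = a

lemma diffL_le {a c : α} (h : a ≤ c) : diffL a c h ≤ c := by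
  have := diffL_anti bot_le h
  rwa [diffL_bot] at this

lemma diffR_le {a c : α} (h : a ≤ c) : diffR a c h ≤ c := by
  have := diffR_anti bot_le h
  rwa [diffR_bot] at this

lemma diffR_diffL_self {a c : α} (h : a ≤ c) : diffR (diffL a c h) c (diffL_le h) = a := by
  have := diffR_diffL bot_le h
  simpa only [diffL_bot] using this

lemma diffL_diffR_self {a c : α} (h : a ≤ c) : diffL (diffR a c h) c (diffR_le h) = a := by
  have := diffL_diffR bot_le h
  simpa only [diffR_bot] using this

lemma isSum_iff_diffR {a b c : α} : IsSum a b c ↔ ∃ h : a ≤ c, diffR a c h = b := by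
  constructor
  · rintro ⟨h, rfl⟩
    exact ⟨diffL_le h, diffR_diffL_self h⟩
  · rintro ⟨h, rfl⟩
    exact ⟨diffR_le h, diffL_diffR_self h⟩

lemma isSum_diffL {b c : α} (h : b ≤ c) : IsSum (diffL b c h) b c := ⟨h, rfl⟩

lemma isSum_diffR {a c : α} (h : a ≤ c) : IsSum a (diffR a c h) c := isSum_iff_diffR.2 ⟨h, rfl⟩

lemma IsSum.left_unique {a a' b c : α} (h : IsSum a b c) (h' : IsSum a' b c) : a = a' := by
  obtain ⟨_, rfl⟩ := h
  obtain ⟨_, rfl⟩ := h'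
  rfl

lemma IsSum.right_unique {a b b' c : α} (h : IsSum a b c) (h' : IsSum a b' c) : b = b' := by
  obtain ⟨_, rfl⟩ := isSum_iff_diffR.1 h
  obtain ⟨_, rfl⟩ := isSum_iff_diffR.1 h'
  rfl

/-- The identity `(c / b) ∖ (c / x) = x / b` in additive form: `c / x + x / b = c / b`. -/
lemma isSum_diffL_diffL {b x c : α} (hbx : b ≤ x) (hxc : x ≤ c) :
    IsSum (diffL x c hxc) (diffL b x hbx) (diffL b c (hbx.trans hxc)) :=
  isSum_iff_diffR.2 ⟨diffL_anti hbx hxc, diffR_diffL hbx hxc⟩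

lemma IsSum.unique {a b c c' : α} (h : IsSum a b c) (h' : IsSum a b c') : c = c' := by
  obtain ⟨hb, rfl⟩ := h
  obtain ⟨hb', e⟩ := h'
  have h1 := isSum_diffL_diffL hb le_top
  have h2 := isSum_diffL_diffL hb' le_top
  rw [e] at h2
  have h3 := h1.left_unique h2
  have h4 := isSum_diffL (le_top : c ≤ ⊤)
  rw [h3] at h4
  exact h4.right_unique (isSum_diffL le_top)

lemma diffR_self (c : α) : diffR c c le_rfl = ⊥ := by
  have := diffR_diffL (le_refl (⊥ : α)) (bot_le : ⊥ ≤ c)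
  simpa only [diffL_bot] using this

lemma diffL_self (c : α) : diffL c c le_rfl = ⊥ := by
  have := diffL_diffR (le_refl (⊥ : α)) (bot_le : ⊥ ≤ c)
  simpa only [diffR_bot] using this

lemma IsSum.assoc {a b c x y : α} (h : IsSum b c x) (h' : IsSum a x y) :
    ∃ ab, IsSum a b ab ∧ IsSum ab c y := by
  obtain ⟨hc, rfl⟩ := h
  obtain ⟨hx, rfl⟩ := h'
  exact ⟨_, isSum_diffL_diffL hc hx, isSum_diffL _⟩

lemma IsSum.eq_bot {a c : α} (h : IsSum a ⊤ c ∨ IsSum ⊤ a c) : a = ⊥ := by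
  rcases h with h | h
  · obtain ⟨hc, rfl⟩ := h
    obtain rfl := top_le_iff.1 hc
    exact diffL_self _
  · obtain ⟨hc, rfl⟩ := isSum_iff_diffR.1 h
    obtain rfl := top_le_iff.1 hc
    exact diffR_self _

open Classical in
/-- The partial addition, with value `none` where the sum is undefined. -/
noncomputable def sum (a b : α) : Option α :=
  if h : ∃ c, IsSum a b c then some h.choose else none

lemma sum_eq_some {a b c : α} : sum a b = some c ↔ IsSum a b c := by
  unfold sum
  split_ifs with h
  · rw [Option.some_inj]
    exact ⟨fun e => e ▸ h.choose_spec, fun hc => h.choose_spec.unique hc⟩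
  · exact ⟨fun e => by simp at e, fun hc => (h ⟨c, hc⟩).elim⟩

end PseudoDPoset

open PseudoDPoset in
/-- For a pseudo D-poset `A`, defining `a + b = c` iff `b ≤ c` and `c / b = a` yields a
pseudo effect algebra `(A, +, 0, 1)` (with `0 = ⊥` and `1 = ⊤`). -/
theorem pseudoDPoset_to_pea {α : Type u} [PseudoDPoset α] :
    ∃ A : PseudoEffectAlgebra α, A.zero = (⊥ : α) ∧ A.one = (⊤ : α) ∧
      ∀ a b c : α, A.add a b = some c ↔
        ∃ h : b ≤ c, PseudoDPoset.diffL b c h = a := by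
  refine ⟨⟨sum, ⊥, ⊤, ?_, ?_, ?_, ?_⟩, rfl, rfl, fun a b c => sum_eq_some⟩ <;>
    simp only [sum_eq_some]
  · exact fun a b c bc abc h h' => h.assoc h'
  · exact fun a => ⟨⟨_, isSum_diffR le_top, fun d hd => hd.right_unique (isSum_diffR _)⟩,
      ⟨_, isSum_diffL le_top, fun e he => he.left_unique (isSum_diffL _)⟩⟩
  · intro a b ab h
    obtain ⟨ha, -⟩ := isSum_iff_diffR.1 h
    obtain ⟨hb, -⟩ := h
    exact ⟨_, _, isSum_diffL ha, isSum_diffR hb⟩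
  · exact fun a c h => IsSum.eq_bot h
end

section
/- A map f : A → B between pseudo effect algebras satisfies f(0) = 0, f(1) = 1, and (whenever a + b is defined in A, f(a) + f(b) is defined in B and f(a+b) = f(a) + f(b)) if and only if f is a morphism of the associated pseudo D-posets, i.e., f is monotone, preserves 0 and 1, and satisfies f(c/a) = f(c)/f(a) and f(c∖a) = f(c)∖f(a) for all a ≤ c. -/
/-!
Both directions rest on cancellation in a pseudo effect algebra (`add_left_cancel`,
`add_right_cancel`): it makes `c / a` the *only* solution of `a + x = c` and `c ∖ a` the only
solution of `x + a = c`. Hence a map preserving sums preserves both differences, and, conversely,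
when `a + b = c` the element `b` is `c / a`, so a map preserving differences sends `a + b = c` to
`f a + f c / f a = f c`.

Cancellation follows by completing the sum to `1` on the left, `e + (a + b) = 1`, reassociating by
(PE1), and using the uniqueness of complements (PE2).
-/

universe u

namespace PseudoEffectAlgebra

variable {α : Type u} (A : PseudoEffectAlgebra α)

theorem add_left_cancel {a b b' c : α} (h : A.add a b = some c) (h' : A.add a b' = some c) :
    b = b' := by
  obtain ⟨e, he, -⟩ := (A.unit c).2
  obtain ⟨x, hx, hxb⟩ := A.assoc e a b c A.one h he
  obtain ⟨y, hy, hyb⟩ := A.assoc e a b' c A.one h' he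
  obtain rfl : x = y := Option.some.inj (hx.symm.trans hy)
  exact (A.unit x).1.unique hxb hyb

theorem add_right_cancel {a b b' c : α} (h : A.add b a = some c) (h' : A.add b' a = some c) :
    b = b' := by
  obtain ⟨e, he, -⟩ := (A.unit c).2
  obtain ⟨x, hx, hxa⟩ := A.assoc e b a c A.one h he
  obtain ⟨y, hy, hya⟩ := A.assoc e b' a c A.one h' he
  -- Both `e + b` and `e + b'` are the left complement of `a`.
  obtain rfl : x = y := (A.unit a).2.unique hxa hya
  exact A.add_left_cancel hx hy

end PseudoEffectAlgebra

/-- A map between pseudo effect algebras preserves `0`, `1` and the partial addition if and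
only if it is a morphism of the associated pseudo D-posets: monotone, preserving `⊥`, `⊤`,
and the partial differences `/` and `∖`. -/
theorem pea_hom_iff_pseudoDPoset_hom {α β : Type u}
    (A : PseudoEffectAlgebra α) (B : PseudoEffectAlgebra β)
    (P : PseudoDPoset α) (Q : PseudoDPoset β) (hP : Compat A P) (hQ : Compat B Q)
    (f : α → β) :
    (f A.zero = B.zero ∧ f A.one = B.one ∧
        ∀ a b c : α, A.add a b = some c → B.add (f a) (f b) = some (f c)) ↔
      (letI := P; letI := Q
       Monotone f ∧ f ⊥ = ⊥ ∧ f ⊤ = ⊤ ∧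
         ∀ (a c : α) (h : a ≤ c) (h' : f a ≤ f c),
           f (PseudoDPoset.diffL a c h) = PseudoDPoset.diffL (f a) (f c) h' ∧
           f (PseudoDPoset.diffR a c h) = PseudoDPoset.diffR (f a) (f c) h') := by
  obtain ⟨hPle, hP0, hP1, hPd⟩ := hP
  obtain ⟨hQle, hQ0, hQ1, hQd⟩ := hQ
  constructor
  · rintro ⟨h0, h1, hadd⟩
    refine ⟨fun a c h => ?_, ?_, ?_, fun a c h h' => ⟨?_, ?_⟩⟩
    · obtain ⟨b, hb⟩ := (hPle a c).1 h
      exact (hQle _ _).2 ⟨f b, hadd a b c hb⟩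
    · exact (congrArg f hP0).trans (h0.trans hQ0.symm)
    · exact (congrArg f hP1).trans (h1.trans hQ1.symm)
    · exact B.add_left_cancel (hadd _ _ _ (hPd a c h).1) (hQd _ _ h').1
    · exact B.add_right_cancel (hadd _ _ _ (hPd a c h).2) (hQd _ _ h').2
  · rintro ⟨hmono, h0, h1, hdiff⟩
    refine ⟨(congrArg f hP0.symm).trans (h0.trans hQ0),
      (congrArg f hP1.symm).trans (h1.trans hQ1), fun a b c hab => ?_⟩
    have h := (hPle a c).2 ⟨b, hab⟩
    have h' := hmono h
    rw [A.add_left_cancel hab (hPd a c h).1, (hdiff a c h h').1]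
    exact (hQd _ _ h').1
end

section
/- Let G be a (not necessarily abelian) partially ordered group, i.e., a group with a partial order in which left and right translations are order-preserving, written additively, and let u be an element with 0 ≤ u. On the interval [0, u] = {x ∈ G : 0 ≤ x ≤ u}, declare a + b (the group operation) to be defined in the algebra if and only if a + b ≤ u. Then ([0,u], +, 0, u) is a pseudo effect algebra. -/
/-!
In a partially ordered group the sum of two elements `a, b` of `[0, u]` is automatically
nonnegative, so the partial sum is defined with value `c` in `[0, u]` exactly when `a + b = c`
holds in `G` (`intervalAdd_eq_some`). Each axiom then becomes a statement about the group:
associativity is inherited, with `a + b ≤ a + (b + c) ≤ u` giving definedness; the complements of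
`a` are `-a + u` and `u - a`; the exchange elements are the conjugates `a + b - a` and
`-b + (a + b)`, which lie between `0` and `a + b`; and either of `a + u ≤ u`,
`u + a ≤ u` forces `a ≤ 0`.
-/

universe u

open Classical in
/-- The partial addition on `[0, u]`: the group sum when it is at most `u`, undefined otherwise. -/
noncomputable def intervalAdd {G : Type u} [AddGroup G] [PartialOrder G]
    [AddLeftMono G] (u : G) (a b : Set.Icc (0 : G) u) : Option (Set.Icc (0 : G) u) :=
  if h : (a : G) + (b : G) ≤ u then some ⟨a + b, add_nonneg a.2.1 b.2.1, h⟩ else none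

theorem intervalAdd_eq_some {G : Type u} [AddGroup G] [PartialOrder G]
    [AddLeftMono G] {u : G} {a b c : Set.Icc (0 : G) u} :
    intervalAdd u a b = some c ↔ (a : G) + (b : G) = c := by
  unfold intervalAdd
  split_ifs with h
  · simp [Subtype.ext_iff]
  · simp only [false_iff]
    exact fun hc => h (hc ▸ c.2.2)

/-- Let `G` be a (not necessarily abelian) partially ordered group, written additively, and
let `u ≥ 0`. On the interval `[0, u]`, declaring `a + b` to be defined iff `a + b ≤ u` (with
value the group sum) yields a pseudo effect algebra with `0` and `u` as its constants. -/
theorem interval_pea {G : Type u} [AddGroup G] [PartialOrder G]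
    [CovariantClass G G (· + ·) (· ≤ ·)]
    [CovariantClass G G (Function.swap (· + ·)) (· ≤ ·)]
    (u : G) (hu : 0 ≤ u) :
    ∃ A : PseudoEffectAlgebra (Set.Icc (0 : G) u),
      (A.zero : G) = 0 ∧ (A.one : G) = u ∧
      ∀ a b : Set.Icc (0 : G) u,
        (∀ c : Set.Icc (0 : G) u, A.add a b = some c → (c : G) = (a : G) + (b : G)) ∧
        ((A.add a b).isSome ↔ (a : G) + (b : G) ≤ u) := by
  have : AddLeftMono G := ‹CovariantClass G G (· + ·) (· ≤ ·)›
  have : AddRightMono G := ‹CovariantClass G G (Function.swap (· + ·)) (· ≤ ·)›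
  refine ⟨⟨intervalAdd u, ⟨0, le_rfl, hu⟩, ⟨u, hu, le_rfl⟩, ?_, ?_, ?_, ?_⟩, rfl, rfl, ?_⟩
  · intro a b c bc abc h₁ h₂
    rw [intervalAdd_eq_some] at h₁ h₂
    have h : (a : G) + b + c = abc := by rw [add_assoc, h₁, h₂]
    have hab : (a : G) + b ≤ u :=
      (le_add_of_nonneg_right c.2.1).trans (h.trans_le abc.2.2)
    exact ⟨⟨a + b, add_nonneg a.2.1 b.2.1, hab⟩,
      intervalAdd_eq_some.2 rfl, intervalAdd_eq_some.2 h⟩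
  · intro a
    simp only [intervalAdd_eq_some]
    refine ⟨⟨⟨-a + u, ?_, ?_⟩, by simp, ?_⟩, ⟨⟨u - a, ?_, ?_⟩, by simp, ?_⟩⟩
    · exact le_neg_add_iff_add_le.2 (by simpa using a.2.2)
    · exact neg_add_le_iff_le_add.2 (le_add_of_nonneg_left a.2.1)
    · exact fun d hd => Subtype.ext (eq_neg_add_of_add_eq hd)
    · exact sub_nonneg.2 a.2.2
    · exact sub_le_iff_le_add.2 (le_add_of_nonneg_right a.2.1)
    · exact fun e he => Subtype.ext (eq_sub_of_add_eq he)
  · intro a b ab h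
    rw [intervalAdd_eq_some] at h
    have hau : (a : G) ≤ ab := h ▸ le_add_of_nonneg_right b.2.1
    have hbu : (b : G) ≤ ab := h ▸ le_add_of_nonneg_left a.2.1
    refine ⟨⟨ab - a, sub_nonneg.2 hau, ?_⟩, ⟨-b + ab, ?_, ?_⟩, ?_, ?_⟩
    · exact (sub_le_iff_le_add.2 (le_add_of_nonneg_right a.2.1)).trans ab.2.2
    · exact le_neg_add_iff_add_le.2 (by simpa using hbu)
    · exact (neg_add_le_iff_le_add.2 (le_add_of_nonneg_left b.2.1)).trans ab.2.2
    · simp [intervalAdd_eq_some]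
    · simp [intervalAdd_eq_some]
  · intro a c h
    simp only [intervalAdd_eq_some] at h
    refine Subtype.ext (le_antisymm ?_ a.2.1)
    rcases h with h | h
    · exact add_le_iff_nonpos_left.1 (h.trans_le c.2.2)
    · exact (add_le_iff_nonpos_right u).1 (h.trans_le c.2.2)
  · intro a b
    refine ⟨fun c h => (intervalAdd_eq_some.1 h).symm, ?_⟩
    simp [intervalAdd]
end

section
/- Let E be the set of all order automorphisms f of the positive real numbers (strictly increasing bijections of (0,∞) onto itself) such that x ≤ f(x) ≤ 2x for all x > 0. Set 0 := the identity map and 1 := the map x ↦ 2x, and for f, g ∈ E define f + g to be f ∘ g whenever f ∘ g ∈ E. Then (E, +, 0, 1) is a pseudo effect algebra, and it is not commutative: there exist f, g ∈ E such that f + g and g + f are both defined and f + g ≠ g + f. -/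
/-!
The bounds `x ≤ f x ≤ 2x` say that `E` is the interval between `0 = id` and `1 = (x ↦ 2x)` in the
group of order automorphisms of `(0, ∞)`, ordered pointwise. Composition is associative,
so (PE1) only asks that `f ∘ g` lie below `1`, which follows from `f (g (h y)) ≤ 2y ≤ 2 (h y)` and
surjectivity of `h`. The two complements of `f` are `f⁻¹ ∘ 1` and `1 ∘ f⁻¹`, and (PE3) holds with
the conjugates `f ∘ g ∘ f⁻¹` and `g⁻¹ ∘ f ∘ g`; group cancellation makes complements unique.

Noncommutativity is witnessed by `f x = 4x/3` and `g x = max x (4x/3 - 1/3)`: both lie below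
`4x/3`, so both composites lie below `16x/9 ≤ 2x`, while `f (g 1) = 4/3` and `g (f 1) = 13/9`.
-/

universe u

/-- The positive real numbers. -/
abbrev PosReal : Type := {x : ℝ // 0 < x}

/-- The property defining the carrier `E`: an order automorphism `f` of the positive reals
such that `x ≤ f x ≤ 2 x` for all `x > 0`. -/
def MemE (f : PosReal ≃o PosReal) : Prop :=
  ∀ x : PosReal, (x : ℝ) ≤ (f x : ℝ) ∧ (f x : ℝ) ≤ 2 * (x : ℝ)

/-- The set `E` of order automorphisms `f` of the positive reals with `x ≤ f x ≤ 2 x`. -/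
abbrev E : Type := {f : PosReal ≃o PosReal // MemE f}

namespace AutomorphismPEA

theorem MemE.le {f : PosReal ≃o PosReal} (hf : MemE f) (x : PosReal) : x ≤ f x := (hf x).1

/-- Multiplication by a positive constant, as an order automorphism of `(0, ∞)`. -/
noncomputable def scale (r : ℝ) (hr : 0 < r) : PosReal ≃o PosReal where
  toFun x := ⟨r * x, mul_pos hr x.2⟩
  invFun x := ⟨x / r, div_pos x.2 hr⟩
  left_inv x := by ext; simp; field_simp
  right_inv x := by ext; simp; field_simp
  map_rel_iff' {x y} := by
    simp only [Equiv.coe_fn_mk, ← Subtype.coe_le_coe]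
    exact mul_le_mul_iff_right₀ hr

theorem scale_coe (r : ℝ) (hr : 0 < r) (x : PosReal) :
    (scale r hr x : ℝ) = r * x := rfl

/-- The automorphism `x ↦ max x (4x/3 - 1/3)`, which is the identity on `(0, 1]` and has
slope `4/3` on `[1, ∞)`. -/
noncomputable def bend : PosReal ≃o PosReal where
  toFun x := ⟨max x (4 / 3 * x - 1 / 3), lt_max_of_lt_left x.2⟩
  invFun y := ⟨min y ((3 * y + 1) / 4), lt_min y.2 (by have := y.2; positivity)⟩
  left_inv x := by ext; simp only; grind
  right_inv x := by ext; simp only; grind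
  map_rel_iff' {x y} := by
    simp only [Equiv.coe_fn_mk, ← Subtype.coe_le_coe]
    grind

theorem bend_coe (x : PosReal) : (bend x : ℝ) = max (x : ℝ) (4 / 3 * x - 1 / 3) := rfl

open Classical in
/-- The partial addition on `E`: composition, defined when the composite lies in `E`. -/
noncomputable def padd (f g : E) : Option E :=
  if h : MemE (g.1.trans f.1) then some ⟨g.1.trans f.1, h⟩ else none

theorem padd_eq_some {f g h : E} :
    padd f g = some h ↔ ∃ hfg : MemE (g.1.trans f.1), h = ⟨g.1.trans f.1, hfg⟩ := by
  unfold padd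
  split_ifs with H
  · simp [H, eq_comm]
  · simp [H]

theorem padd_iff {f g h : E} : padd f g = some h ↔ ∀ x, f.1 (g.1 x) = h.1 x := by
  rw [padd_eq_some]
  constructor
  · rintro ⟨_, rfl⟩ x
    rfl
  · intro H
    have e : h.1 = g.1.trans f.1 := by ext x; simp [H x]
    exact ⟨e ▸ h.2, Subtype.ext e⟩

theorem memE_refl : MemE (OrderIso.refl PosReal) := fun x => by
  have := x.2
  simp only [OrderIso.refl_apply]
  constructor <;> linarith

/-- Multiplication by `2`, the top of the interval. -/
noncomputable abbrev dbl : PosReal ≃o PosReal := scale 2 two_pos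

theorem memE_iff {f : PosReal ≃o PosReal} : MemE f ↔ ∀ x, x ≤ f x ∧ f x ≤ dbl x := Iff.rfl

theorem memE_dbl : MemE dbl := fun x => by
  have := x.2
  simp only [scale_coe]
  constructor <;> linarith

/-- The pseudo effect algebra of order automorphisms between `id` and `x ↦ 2x`. -/
noncomputable def pea : PseudoEffectAlgebra E where
  add := padd
  zero := ⟨_, memE_refl⟩
  one := ⟨_, memE_dbl⟩
  assoc a b c bc abc h₁ h₂ := by
    rw [padd_iff] at h₁ h₂
    have hm : MemE (b.1.trans a.1) := memE_iff.2 fun x => by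
      refine ⟨(MemE.le b.2 x).trans (MemE.le a.2 _), ?_⟩
      obtain ⟨y, rfl⟩ := c.1.surjective x
      simp only [OrderIso.trans_apply, h₁, h₂]
      exact (memE_iff.1 abc.2 y).2.trans (dbl.monotone (MemE.le c.2 y))
    refine ⟨⟨_, hm⟩, padd_iff.2 fun x => rfl, padd_iff.2 fun x => ?_⟩
    simp [h₁, h₂]
  unit a := by
    simp only [padd_iff]
    constructor
    · refine ⟨⟨dbl.trans a.1.symm, memE_iff.2 fun x => ?_⟩, fun x => by simp, fun d hd => ?_⟩
      · simp only [OrderIso.trans_apply, OrderIso.le_symm_apply, OrderIso.symm_apply_le]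
        exact ⟨(memE_iff.1 a.2 x).2, MemE.le a.2 _⟩
      · ext1; ext1; funext x
        simp [← hd]
    · refine ⟨⟨a.1.symm.trans dbl, memE_iff.2 fun x => ?_⟩, fun x => by simp, fun d hd => ?_⟩
      · obtain ⟨y, rfl⟩ := a.1.surjective x
        simp only [OrderIso.trans_apply, OrderIso.symm_apply_apply]
        exact ⟨(memE_iff.1 a.2 y).2, dbl.monotone (MemE.le a.2 y)⟩
      · ext1; ext1; funext x
        simp [← hd]
  exchange a b ab h := by
    simp only [padd_iff] at h ⊢
    refine ⟨⟨(a.1.symm.trans b.1).trans a.1, memE_iff.2 fun x => ?_⟩,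
      ⟨(b.1.trans a.1).trans b.1.symm, memE_iff.2 fun x => ?_⟩,
      fun x => by simp [h], fun x => by simp [h]⟩
    · obtain ⟨y, rfl⟩ := a.1.surjective x
      simp only [OrderIso.trans_apply, OrderIso.symm_apply_apply]
      refine ⟨a.1.monotone (MemE.le b.2 y), ?_⟩
      rw [h]
      exact (memE_iff.1 ab.2 y).2.trans (dbl.monotone (MemE.le a.2 y))
    · simp only [OrderIso.trans_apply, OrderIso.le_symm_apply, OrderIso.symm_apply_le]
      refine ⟨MemE.le a.2 _, ?_⟩
      rw [h]
      exact (memE_iff.1 ab.2 x).2.trans (MemE.le b.2 _)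
  pos a c h := by
    simp only [padd_iff] at h
    ext1; ext1; funext x
    refine le_antisymm ?_ (MemE.le a.2 x)
    rcases h with h | h
    · obtain ⟨y, rfl⟩ := dbl.surjective x
      rw [h]
      exact (memE_iff.1 c.2 y).2
    · rw [← dbl.le_iff_le, h]
      exact (memE_iff.1 c.2 x).2

theorem memE_scale : MemE (scale (4 / 3) (by norm_num)) := fun x => by
  have := x.2
  simp only [scale_coe]
  constructor <;> linarith

theorem memE_bend : MemE bend := fun x => by
  have := x.2
  simp only [bend_coe]
  grind

theorem memE_scale_bend : MemE (bend.trans (scale (4 / 3) (by norm_num))) := fun x => by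
  have := x.2
  simp only [OrderIso.trans_apply, scale_coe, bend_coe]
  grind

theorem memE_bend_scale : MemE ((scale (4 / 3) (by norm_num)).trans bend) := fun x => by
  have := x.2
  simp only [OrderIso.trans_apply, scale_coe, bend_coe]
  grind

end AutomorphismPEA


/-- On the set `E` of order automorphisms `f` of `(0, ∞)` with `x ≤ f(x) ≤ 2x`, taking
`0 := id`, `1 := (x ↦ 2x)`, and `f + g := f ∘ g` whenever `f ∘ g ∈ E`, gives a pseudo effect
algebra; moreover this pseudo effect algebra is not commutative. -/
theorem automorphism_pea :
    ∃ A : PseudoEffectAlgebra E,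
      (∀ x : PosReal, A.zero.1 x = x) ∧
      (∀ x : PosReal, (A.one.1 x : ℝ) = 2 * (x : ℝ)) ∧
      (∀ f g h : E, A.add f g = some h ↔ ∃ hfg : MemE (g.1.trans f.1), h = ⟨g.1.trans f.1, hfg⟩) ∧
      (∃ f g c d : E, A.add f g = some c ∧ A.add g f = some d ∧ c ≠ d) := by
  open AutomorphismPEA in
  refine ⟨pea, fun _ => rfl, fun _ => rfl, fun _ _ _ => padd_eq_some, ⟨_, memE_scale⟩,
    ⟨_, memE_bend⟩, ⟨_, memE_scale_bend⟩, ⟨_, memE_bend_scale⟩,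
    padd_iff.2 fun _ => rfl, padd_iff.2 fun _ => rfl, fun h => ?_⟩
  -- the two composites differ at `1`
  have h1 := congrArg (fun k : E => (k.1 ⟨1, one_pos⟩ : ℝ)) h
  simp only [OrderIso.trans_apply, scale_coe, bend_coe] at h1
  grind
end
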